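/- Let m, d be positive integers, let α_1, …, α_m be nonnegative real numbers with α_1 + ⋯ + α_m = 1, and let U_1, …, U_m be d×d complex matrices each of operator norm at most 1. Define Δ(B) = Σ_{j=1}^m α_j U_j B U_jᴴ for d×d complex matrices B. Then there exists an (m·d)×(m·d) complex matrix U of operator norm at most 1 such that for every d×d complex matrix B, the block-diagonal compression of U·(diag(α) ⊗ B)·Uᴴ equals (1/m)·(I_m ⊗ Δ(B)). -/

import Mathlib

/-!
Let `F` be the unitary discrete Fourier matrix of size `m`, all of whose entries have modulus
`1 / √m`, and let `D` be the block-diagonal matrix with blocks `V_k`. The dilation is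
`U = (F ⊗ 1) D`. It is a contraction because `F ⊗ 1` is unitary and `D` is a block sum of
contractions. Its `(j, k)` block is `F_{jk} V_k`, so the `j`-th diagonal block of
`U (diag(α) ⊗ B) Uᴴ` is `∑_k |F_{jk}|² α_k V_k B V_kᴴ = (1/m) ∑_k α_k V_k B V_kᴴ`.
-/

open Matrix
open scoped Kronecker

/-- The operator norm of a square complex matrix, i.e. its norm as an operator
on Euclidean (ℓ²) space. -/
noncomputable def l2OpNorm {n : Type*} [Fintype n] [DecidableEq n]
    (A : Matrix n n ℂ) : ℝ :=
  ‖Matrix.toEuclideanCLM (𝕜 := ℂ) A‖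

/-- The block-diagonal compression of an `(m·d) × (m·d)` matrix indexed by pairs:
it keeps the `m` diagonal `d × d` blocks and sets all off-diagonal blocks to zero. -/
def blockDiagCompress {m d : Type*} [DecidableEq m]
    (C : Matrix (m × d) (m × d) ℂ) : Matrix (m × d) (m × d) ℂ :=
  fun p q => if p.1 = q.1 then C p (p.1, q.2) else 0

/-- The discrete Fourier matrix: a unitary matrix whose entries all have squared modulus `1/m`. -/
lemma exists_flat_unitary (m : ℕ) (hm : 0 < m) :
    ∃ F : Matrix (Fin m) (Fin m) ℂ, Fᴴ * F = 1 ∧ ∀ j k, F j k * star (F j k) = 1 / (m : ℂ) := by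
  have hm0 : (m : ℂ) ≠ 0 := by exact_mod_cast hm.ne'
  obtain ⟨ζ, hζ⟩ : ∃ ζ : ℂ, IsPrimitiveRoot ζ m := ⟨_, Complex.isPrimitiveRoot_exp m hm.ne'⟩
  have hnorm : ζ * star ζ = 1 := by
    have h : ‖ζ‖ = 1 := Complex.norm_eq_one_of_pow_eq_one hζ.pow_eq_one hm.ne'
    rw [Complex.star_def, Complex.mul_conj, Complex.normSq_eq_norm_sq, h]
    simp
  have hsm : star ζ ^ m = 1 := by rw [← star_pow, hζ.pow_eq_one, star_one]
  have hpow : ∀ n : ℕ, ζ ^ n * star ζ ^ n = 1 := fun n => by rw [← mul_pow, hnorm, one_pow]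
  obtain ⟨c, hc⟩ : ∃ c : ℂ, star c * c = 1 / (m : ℂ) := by
    refine ⟨((Real.sqrt (1 / m) : ℝ) : ℂ), ?_⟩
    rw [Complex.star_def, Complex.conj_ofReal, ← Complex.ofReal_mul,
      Real.mul_self_sqrt (by positivity)]
    simp
  refine ⟨Matrix.of fun j k => c * ζ ^ ((j : ℕ) * (k : ℕ)), ?_, fun j k => ?_⟩
  · ext j k
    have key : ∀ l : Fin m, star (c * ζ ^ ((l : ℕ) * (j : ℕ))) * (c * ζ ^ ((l : ℕ) * (k : ℕ)))
        = (1 / (m : ℂ)) * (ζ ^ (k : ℕ) * star ζ ^ (j : ℕ)) ^ (l : ℕ) := fun l => by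
      rw [star_mul', star_pow, ← hc, mul_pow, ← pow_mul, ← pow_mul, mul_comm (l : ℕ),
        mul_comm (l : ℕ)]
      ring
    simp only [Matrix.mul_apply, Matrix.conjTranspose_apply, Matrix.of_apply, key]
    rw [← Finset.mul_sum,
      Fin.sum_univ_eq_sum_range (fun l => (ζ ^ (k : ℕ) * star ζ ^ (j : ℕ)) ^ l) m]
    by_cases hjk : j = k
    · subst hjk
      simp only [hpow, one_pow, Finset.sum_const, Finset.card_range, nsmul_eq_mul, mul_one,
        Matrix.one_apply_eq]
      exact one_div_mul_cancel hm0
    · rw [Matrix.one_apply_ne hjk]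
      set w := ζ ^ (k : ℕ) * star ζ ^ (j : ℕ) with hw
      have hw1 : w ≠ 1 := fun h => by
        apply hjk
        have : ζ ^ (k : ℕ) = ζ ^ (j : ℕ) := by
          calc ζ ^ (k : ℕ) = ζ ^ (k : ℕ) * (ζ ^ (j : ℕ) * star ζ ^ (j : ℕ)) := by
                rw [hpow, mul_one]
            _ = w * ζ ^ (j : ℕ) := by rw [hw]; ring
            _ = ζ ^ (j : ℕ) := by rw [h, one_mul]
        exact Fin.ext (hζ.pow_inj k.2 j.2 this).symm
      have hwm : w ^ m = 1 := by
        rw [hw, mul_pow, ← pow_mul, ← pow_mul, mul_comm (k : ℕ), mul_comm (j : ℕ), pow_mul,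
          pow_mul, hζ.pow_eq_one, hsm, one_pow, one_pow, one_mul]
      have h0 : ∑ i ∈ Finset.range m, w ^ i = 0 := by
        have h := mul_geom_sum w m
        rw [hwm, sub_self] at h
        exact (mul_eq_zero.mp h).resolve_left (sub_ne_zero.mpr hw1)
      rw [h0, mul_zero]
  · simp only [Matrix.of_apply]
    rw [star_mul', star_pow, ← hc]
    linear_combination (c * star c) * hpow ((j : ℕ) * (k : ℕ))

lemma l2OpNorm_mul_le {n : Type*} [Fintype n] [DecidableEq n] (A B : Matrix n n ℂ) :
    l2OpNorm (A * B) ≤ l2OpNorm A * l2OpNorm B := by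
  unfold l2OpNorm
  rw [map_mul]
  exact norm_mul_le _ _

lemma l2OpNorm_le_one_of_isometry {n : Type*} [Fintype n] [DecidableEq n] (A : Matrix n n ℂ)
    (h : Aᴴ * A = 1) : l2OpNorm A ≤ 1 := by
  unfold l2OpNorm
  have h1 : star (Matrix.toEuclideanCLM (𝕜 := ℂ) A) * Matrix.toEuclideanCLM (𝕜 := ℂ) A = 1 := by
    rw [← map_star, ← map_mul, Matrix.star_eq_conjTranspose, h, map_one]
  have h2 := CStarRing.norm_star_mul_self (x := Matrix.toEuclideanCLM (𝕜 := ℂ) A)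
  rw [h1] at h2
  have h3 : ‖(1 : EuclideanSpace ℂ n →L[ℂ] EuclideanSpace ℂ n)‖ ≤ 1 :=
    ContinuousLinearMap.norm_id_le
  nlinarith [norm_nonneg (Matrix.toEuclideanCLM (𝕜 := ℂ) A)]

lemma l2OpNorm_le_one_iff {n : Type*} [Fintype n] [DecidableEq n] (A : Matrix n n ℂ) :
    l2OpNorm A ≤ 1 ↔ ∀ x : n → ℂ, ∑ i, ‖(A *ᵥ x) i‖ ^ 2 ≤ ∑ i, ‖x i‖ ^ 2 := by
  unfold l2OpNorm
  rw [ContinuousLinearMap.opNorm_le_iff zero_le_one]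
  have key : ∀ x : n → ℂ, ‖Matrix.toEuclideanCLM (𝕜 := ℂ) A (WithLp.toLp 2 x)‖
      ≤ 1 * ‖(WithLp.toLp 2 x : EuclideanSpace ℂ n)‖ ↔
      ∑ i, ‖(A *ᵥ x) i‖ ^ 2 ≤ ∑ i, ‖x i‖ ^ 2 := fun x => by
    rw [one_mul, ← sq_le_sq₀ (norm_nonneg _) (norm_nonneg _), EuclideanSpace.norm_sq_eq,
      EuclideanSpace.norm_sq_eq, Matrix.toEuclideanCLM_toLp]
  exact ⟨fun h x => (key x).1 (h _), fun h x => (key x.ofLp).2 (h _)⟩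

/-- The block-diagonal matrix with blocks `V j`, indexed by (block, entry). Mathlib's
`Matrix.blockDiagonal` uses the opposite order of the index pair. -/
def blockSum {m d : ℕ} (V : Fin m → Matrix (Fin d) (Fin d) ℂ) :
    Matrix (Fin m × Fin d) (Fin m × Fin d) ℂ :=
  fun p q => if p.1 = q.1 then V p.1 p.2 q.2 else 0

lemma l2OpNorm_blockSum_le_one {m d : ℕ} (V : Fin m → Matrix (Fin d) (Fin d) ℂ)
    (hV : ∀ j, l2OpNorm (V j) ≤ 1) : l2OpNorm (blockSum V) ≤ 1 := by
  rw [l2OpNorm_le_one_iff]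
  intro x
  rw [Fintype.sum_prod_type, Fintype.sum_prod_type]
  refine Finset.sum_le_sum fun j _ => ?_
  have h := (l2OpNorm_le_one_iff (V j)).1 (hV j) fun a => x (j, a)
  have hentry : ∀ a, (blockSum V *ᵥ x) (j, a) = (V j *ᵥ fun b => x (j, b)) a := fun a => by
    simp [blockSum, Matrix.mulVec, dotProduct, Fintype.sum_prod_type, ite_mul]
  simpa only [hentry] using h

/-- Dilation of a contractive mixture of contractions: given `Δ(B) = Σ_j α_j U_j B U_jᴴ`
with `‖U_j‖ ≤ 1` and `α` a probability vector, there is a contraction `U` on the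
`m·d`-dimensional space with
`E_{A_m ⊗ M_d}(U (diag(α) ⊗ B) Uᴴ) = (1/m) I_m ⊗ Δ(B)` for all `B`. -/
theorem exists_contraction_dilation_of_mixture
    (m d : ℕ) (hm : 0 < m) (hd : 0 < d)
    (α : Fin m → ℝ) (hα : ∀ j, 0 ≤ α j) (hsum : ∑ j, α j = 1)
    (V : Fin m → Matrix (Fin d) (Fin d) ℂ) (hV : ∀ j, l2OpNorm (V j) ≤ 1) :
    ∃ U : Matrix (Fin m × Fin d) (Fin m × Fin d) ℂ, l2OpNorm U ≤ 1 ∧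
      ∀ B : Matrix (Fin d) (Fin d) ℂ,
        blockDiagCompress (U * ((Matrix.diagonal fun j => (α j : ℂ)) ⊗ₖ B) * Uᴴ)
          = ((1 : ℂ) / m) •
              ((1 : Matrix (Fin m) (Fin m) ℂ) ⊗ₖ (∑ j, (α j : ℂ) • (V j * B * (V j)ᴴ))) := by
  obtain ⟨F, hF, hflat⟩ := exists_flat_unitary m hm
  have hU : ∀ p q, ((F ⊗ₖ (1 : Matrix (Fin d) (Fin d) ℂ)) * blockSum V) p q
      = F p.1 q.1 * V q.1 p.2 q.2 := fun p q => by
    simp [blockSum, Matrix.mul_apply, Fintype.sum_prod_type, Matrix.one_apply]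
  refine ⟨(F ⊗ₖ (1 : Matrix (Fin d) (Fin d) ℂ)) * blockSum V, ?_, fun B => ?_⟩
  · have h1 : l2OpNorm (F ⊗ₖ (1 : Matrix (Fin d) (Fin d) ℂ)) ≤ 1 := by
      apply l2OpNorm_le_one_of_isometry
      rw [Matrix.conjTranspose_kronecker, ← Matrix.mul_kronecker_mul, hF,
        Matrix.conjTranspose_one, mul_one, Matrix.one_kronecker_one]
    exact (l2OpNorm_mul_le _ _).trans
      (mul_le_one₀ h1 (norm_nonneg _) (l2OpNorm_blockSum_le_one V hV))
  · ext ⟨j, a⟩ ⟨k, b⟩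
    by_cases hjk : j = k
    · subst hjk
      have hleft : ∀ l c, ((F ⊗ₖ (1 : Matrix (Fin d) (Fin d) ℂ)) * blockSum V *
          ((Matrix.diagonal fun j => (α j : ℂ)) ⊗ₖ B)) (j, a) (l, c)
          = F j l * (α l : ℂ) * (V l * B) a c := fun l c => by
        rw [Matrix.mul_apply]
        simp only [hU, Fintype.sum_prod_type, Matrix.kroneckerMap_apply, Matrix.diagonal_apply,
          Matrix.mul_apply (M := V l), Finset.mul_sum]
        rw [Finset.sum_eq_single l (fun i _ hi => by simp [hi]) (by simp)]
        refine Finset.sum_congr rfl fun e _ => ?_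
        rw [if_pos rfl]
        ring
      simp only [blockDiagCompress, if_true]
      rw [Matrix.mul_apply]
      simp only [Fintype.sum_prod_type, hleft, Matrix.conjTranspose_apply, hU, Matrix.smul_apply,
        Matrix.kroneckerMap_apply, Matrix.one_apply_eq, Matrix.sum_apply, smul_eq_mul, one_mul,
        Finset.mul_sum]
      refine Finset.sum_congr rfl fun l _ => ?_
      rw [Matrix.mul_apply (M := V l * B), Finset.mul_sum, Finset.mul_sum]
      refine Finset.sum_congr rfl fun c _ => ?_
      rw [Matrix.conjTranspose_apply, star_mul', ← hflat j l]
      ring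
    · simp [blockDiagCompress, hjk]
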